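/- Let d ≥ 1 and let a = (a_0, …, a_{d+1}) ∈ ℤ^{d+2} be balanced nonzero with a_0 + a_1 ≠ 0; set b = (a_0 + a_1, a_2, …, a_{d+1}) and c = (a_0, a_1, −a_0 − a_1). Let U = (U_0, U_1, U_2) ∈ ℂ^3 and V = (V_0, …, V_d) ∈ ℂ^{d+1} have all coordinates nonzero and satisfy U_0 + U_1 + U_2 = 0 and V_0 + ⋯ + V_d = 0. Define Z = (−V_0·U_0, −V_0·U_1, U_2·V_1, U_2·V_2, …, U_2·V_d) ∈ ℂ^{d+2}. Then all coordinates of Z are nonzero, Z_0 + Z_1 + ⋯ + Z_{d+1} = 0, Z_0 + Z_1 ≠ 0, and ∏_{i=0}^{d+1} Z_i^{a_i} = (−1)^{a_0+a_1} · (∏_{i=0}^{d} V_i^{b_i}) · (∏_{i=0}^{2} U_i^{c_i}), where all integer powers are zpow in ℂ. -/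

import Mathlib

/-!
The vector `Z` consists of the block `(U₀, U₁)` scaled by `-V₀` and the block `(V₁, …, V_d)` scaled
by `U₂`. The relations for `U` and `V` turn the two block sums into `V₀U₂` and `-U₂V₀`,
which cancel. Homogeneity of Laurent monomials pulls out `(-V₀)^(a₀ + a₁)` from the first block and
`U₂^(a₂ + ⋯ + a_{d+1}) = U₂^(-a₀ - a₁)` from the second: these are the factors of the potentials of
`b` and `c` at the coordinates along which `U` and `V` are glued, up to the sign `(-1)^(a₀ + a₁)`.
-/

section PairOfPants

/-- The pair-of-pants locus: the vectors with nonzero coordinates of sum zero, as affine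
representatives rather than points of projective space. -/
def pairOfPants (ι R : Type*) [Fintype ι] [AddCommMonoid R] : Set (ι → R) :=
  {Z | (∀ i, Z i ≠ 0) ∧ ∑ i, Z i = 0}

/-- The gluing of `U` and `V` along the coordinates `U 2` and `V 0`. Its first two entries are
the coordinates of `U` other than `U 2`, scaled by `-V 0`, and the others are those of `V` other
than `V 0`, scaled by `U 2`. -/
def glue {R : Type*} [Mul R] [Neg R] {d : ℕ} (U : Fin 3 → R) (V : Fin (d + 1) → R) :
    Fin (d + 2) → R :=
  Fin.cons (-(V 0) * U 0) (Fin.cons (-(V 0) * U 1) (U 2 • Fin.tail V))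

variable {R : Type*} [CommRing R] {d : ℕ} {U : Fin 3 → R} {V : Fin (d + 1) → R}

theorem glue_zero_add_glue_one (hU : ∑ i, U i = 0) : glue U V 0 + glue U V 1 = V 0 * U 2 := by
  rw [Fin.sum_univ_three] at hU
  change -(V 0) * U 0 + -(V 0) * U 1 = V 0 * U 2
  linear_combination -(V 0) * hU

theorem sum_glue (hU : ∑ i, U i = 0) (hV : ∑ i, V i = 0) : ∑ i, glue U V i = 0 := by
  rw [Fin.sum_univ_succ] at hV
  calc ∑ i, glue U V i
      = (glue U V 0 + glue U V 1) + ∑ i : Fin d, U 2 * V i.succ := by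
        rw [Fin.sum_univ_succ, Fin.sum_univ_succ, ← add_assoc]; rfl
    _ = V 0 * U 2 + U 2 * ∑ i : Fin d, V i.succ := by
        rw [glue_zero_add_glue_one hU, Finset.mul_sum]
    _ = 0 := by linear_combination U 2 * hV

theorem glue_ne_zero [NoZeroDivisors R] (hU : ∀ i, U i ≠ 0) (hV : ∀ i, V i ≠ 0) (i : Fin (d + 2)) :
    glue U V i ≠ 0 := by
  have hV0 : -(V 0) ≠ 0 := neg_ne_zero.mpr (hV 0)
  refine Fin.cases (mul_ne_zero hV0 (hU 0)) (Fin.cases (mul_ne_zero hV0 (hU 1)) fun j ↦ ?_) i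
  exact mul_ne_zero (hU 2) (hV j.succ)

theorem glue_mem_pairOfPants [NoZeroDivisors R] (hU : U ∈ pairOfPants (Fin 3) R)
    (hV : V ∈ pairOfPants (Fin (d + 1)) R) : glue U V ∈ pairOfPants (Fin (d + 2)) R :=
  ⟨glue_ne_zero hU.1 hV.1, sum_glue hU.2 hV.2⟩

end PairOfPants

section CircuitPotential

/-- The circuit potential of the exponent vector `a`: the Laurent monomial `∏ i, Z i ^ a i`,
defined for all `Z` although it is meaningful only where the coordinates do not vanish. -/
def circuitPotential {ι K : Type*} [Fintype ι] [CommGroupWithZero K] (a : ι → ℤ) (Z : ι → K) : K :=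
  ∏ i, Z i ^ a i

theorem zpow_sum₀ {ι K : Type*} [CommGroupWithZero K] {x : K} (hx : x ≠ 0) (s : Finset ι)
    (a : ι → ℤ) : x ^ (∑ i ∈ s, a i) = ∏ i ∈ s, x ^ a i := by
  induction s using Finset.cons_induction with
  | empty => simp
  | cons i s hi ih => rw [Finset.sum_cons, Finset.prod_cons, zpow_add₀ hx, ih]

theorem circuitPotential_smul {ι K : Type*} [Fintype ι] [CommGroupWithZero K] {x : K}
    (hx : x ≠ 0) (a : ι → ℤ) (Z : ι → K) :
    circuitPotential a (x • Z) = x ^ (∑ i, a i) * circuitPotential a Z := by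
  simp only [circuitPotential, Pi.smul_apply, smul_eq_mul, mul_zpow, Finset.prod_mul_distrib,
    zpow_sum₀ hx]

theorem circuitPotential_cons {K : Type*} [CommGroupWithZero K] {n : ℕ} (a : Fin (n + 1) → ℤ)
    (x : K) (Z : Fin n → K) :
    circuitPotential a (Fin.cons x Z) = x ^ a 0 * circuitPotential (Fin.tail a) Z :=
  Fin.prod_univ_succ _

/-- The exponent vector `b` of the gluing formula: the first two entries of `a` are added. -/
def mergeExponents {d : ℕ} (a : Fin (d + 2) → ℤ) : Fin (d + 1) → ℤ :=
  Fin.cons (a 0 + a 1) fun i ↦ a i.succ.succ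

/-- The exponent vector `c` of the gluing formula: the first two entries of `a`, completed to a
vector of sum zero. -/
def splitExponents {d : ℕ} (a : Fin (d + 2) → ℤ) : Fin 3 → ℤ :=
  ![a 0, a 1, -(a 0) - a 1]

variable {K : Type*} {d : ℕ}

theorem circuitPotential_mergeExponents [CommGroupWithZero K] (a : Fin (d + 2) → ℤ)
    (V : Fin (d + 1) → K) :
    circuitPotential (mergeExponents a) V =
      V 0 ^ (a 0 + a 1) * circuitPotential (Fin.tail (Fin.tail a)) (Fin.tail V) :=
  Fin.prod_univ_succ _

theorem circuitPotential_splitExponents [CommGroupWithZero K] (a : Fin (d + 2) → ℤ)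
    (U : Fin 3 → K) :
    circuitPotential (splitExponents a) U = U 0 ^ a 0 * U 1 ^ a 1 * U 2 ^ (-(a 0) - a 1) :=
  Fin.prod_univ_three _

theorem sum_tail_tail_of_sum_eq_zero {A : Type*} [AddCommGroup A] {a : Fin (d + 2) → A}
    (ha : ∑ i, a i = 0) : ∑ i, Fin.tail (Fin.tail a) i = -(a 0) - a 1 := by
  have hsplit : a 0 + a 1 + ∑ i, Fin.tail (Fin.tail a) i = 0 := by
    rw [Fin.sum_univ_succ, Fin.sum_univ_succ, ← add_assoc] at ha
    exact ha
  rw [eq_neg_of_add_eq_zero_right hsplit, neg_add']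

theorem circuitPotential_glue [Field K] {a : Fin (d + 2) → ℤ} (ha : ∑ i, a i = 0)
    {U : Fin 3 → K} (hU : U 2 ≠ 0) {V : Fin (d + 1) → K} (hV : V 0 ≠ 0) :
    circuitPotential a (glue U V) =
      (-1) ^ (a 0 + a 1) * circuitPotential (mergeExponents a) V *
        circuitPotential (splitExponents a) U := by
  have hscale : (-V 0) ^ a 0 * (-V 0) ^ a 1 = (-1) ^ (a 0 + a 1) * V 0 ^ (a 0 + a 1) := by
    rw [← zpow_add₀ (neg_ne_zero.mpr hV), ← mul_zpow, neg_one_mul]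
  calc circuitPotential a (glue U V)
      = (-V 0 * U 0) ^ a 0 * ((-V 0 * U 1) ^ a 1 *
          circuitPotential (Fin.tail (Fin.tail a)) (U 2 • Fin.tail V)) := by
        rw [glue, circuitPotential_cons, circuitPotential_cons]; rfl
    _ = ((-V 0) ^ a 0 * (-V 0) ^ a 1) * (U 0 ^ a 0 * U 1 ^ a 1 * U 2 ^ (-(a 0) - a 1)) *
          circuitPotential (Fin.tail (Fin.tail a)) (Fin.tail V) := by
        rw [circuitPotential_smul hU, sum_tail_tail_of_sum_eq_zero ha, mul_zpow, mul_zpow]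
        ring
    _ = (-1) ^ (a 0 + a 1) * circuitPotential (mergeExponents a) V *
          circuitPotential (splitExponents a) U := by
        rw [hscale, circuitPotential_mergeExponents, circuitPotential_splitExponents]
        ring

end CircuitPotential

theorem statement8_general {K : Type*} [Field K] {d : ℕ} {a : Fin (d + 2) → ℤ}
    (ha : ∑ i, a i = 0) {U : Fin 3 → K} (hU : U ∈ pairOfPants (Fin 3) K)
    {V : Fin (d + 1) → K} (hV : V ∈ pairOfPants (Fin (d + 1)) K) :
    glue U V ∈ pairOfPants (Fin (d + 2)) K ∧ glue U V 0 + glue U V 1 ≠ 0 ∧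
      circuitPotential a (glue U V) =
        (-1) ^ (a 0 + a 1) * circuitPotential (mergeExponents a) V *
          circuitPotential (splitExponents a) U := by
  refine ⟨glue_mem_pairOfPants hU hV, ?_, circuitPotential_glue ha (hU.1 2) (hV.1 0)⟩
  rw [glue_zero_add_glue_one hU.2]
  exact mul_ne_zero (hV.1 0) (hU.1 2)

/-- Let `a ∈ ℤ^{d+2}` (`d ≥ 1`) be balanced nonzero with `a₀ + a₁ ≠ 0`,
and `b = (a₀+a₁, a₂, …, a_{d+1})`, `c = (a₀, a₁, -a₀-a₁)`.  If `U ∈ ℂ³`, `V ∈ ℂ^{d+1}`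
have nonzero coordinates summing to zero, then
`Z = (-V₀U₀, -V₀U₁, U₂V₁, …, U₂V_d)` has nonzero coordinates, sums to zero, has
`Z₀ + Z₁ ≠ 0`, and `∏ Zᵢ^{aᵢ} = (-1)^(a₀+a₁) (∏ Vᵢ^{bᵢ}) (∏ Uᵢ^{cᵢ})` (zpow). -/
theorem statement8 (d : ℕ) (hd : 1 ≤ d) (a : Fin (d + 2) → ℤ)
    (hne : ∀ i, a i ≠ 0) (hbal : ∑ i, a i = 0) (h01 : a 0 + a 1 ≠ 0)
    (b : Fin (d + 1) → ℤ) (hb : b = Fin.cons (a 0 + a 1) (fun i : Fin d => a i.succ.succ))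
    (c : Fin 3 → ℤ) (hc : c = ![a 0, a 1, -(a 0) - a 1])
    (U : Fin 3 → ℂ) (hU0 : ∀ i, U i ≠ 0) (hUs : ∑ i, U i = 0)
    (V : Fin (d + 1) → ℂ) (hV0 : ∀ i, V i ≠ 0) (hVs : ∑ i, V i = 0)
    (Z : Fin (d + 2) → ℂ)
    (hZ : Z = Fin.cons (-(V 0) * U 0)
      (Fin.cons (-(V 0) * U 1) (fun i : Fin d => U 2 * V i.succ))) :
    (∀ i, Z i ≠ 0) ∧ ∑ i, Z i = 0 ∧ Z 0 + Z 1 ≠ 0 ∧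
    ∏ i : Fin (d + 2), Z i ^ a i =
      (-1 : ℂ) ^ (a 0 + a 1) * (∏ i : Fin (d + 1), V i ^ b i) * ∏ i : Fin 3, U i ^ c i := by
  subst hb hc hZ
  exact and_assoc.mp (statement8_general hbal ⟨hU0, hUs⟩ ⟨hV0, hVs⟩)
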